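/- arXiv:2109.06428 — 2 statements merged into one kernel-verified Lean document; each statement's English description precedes it below -/
import Mathlib

section
/- Let α̃, β̃ ∈ ℂ, let i be the imaginary unit, and set κ₀ = (1 − α̃ + β̃)/3 and θ∞ = (−2 + (i√3 − 1)α̃ + (i√3 + 1)β̃)/6, and c' = 3^{1/4}(1−i)/2. Then for all x, y, z ∈ ℂ, setting f = ((1−i)/3^{3/4})(x + y − z), g = −((1+i)/(4·3^{3/4}))((√3 + i)x − (√3 − i)y + 2i·z) and t = c'·z, the identity H_Kek(x, y; z) = 3( c'·H_Ok(f, g; t) − ((1 + i√3)/6)x + ((1 − i√3)/6)y + z³/9 + ((1 + i√3)/6)z·α̃ + ((1 − i√3)/6)z·β̃ ) holds, where H_Kek(x,y;z) = (x³ + y³)/3 + z·xy + α̃·y + β̃·x and H_Ok(f,g;t) = 2fg² − (f² + 2tf + 2κ₀)g + θ∞·f. -/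
open Complex

/-- under the substitutions `f = ((1−i)/3^(3/4))(x+y−z)`,
`g = −((1+i)/(4·3^(3/4)))((√3+i)x − (√3−i)y + 2iz)`, `t = c'·z`, and with parameters
`κ₀ = (1 − α̃ + β̃)/3`, `θ∞ = (−2 + (i√3 − 1)α̃ + (i√3 + 1)β̃)/6`, the Kecker
Hamiltonian for P_IV is related to the Okamoto Hamiltonian as stated in Theorem 2.3. -/
theorem kecker_equals_okamoto_hamiltonian_PIV
    (αk βk κ₀ θoo c' : ℂ)
    (hκ₀ : κ₀ = (1 - αk + βk) / 3)
    (hθoo : θoo = (-2 + (I * (Real.sqrt 3 : ℂ) - 1) * αk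
      + (I * (Real.sqrt 3 : ℂ) + 1) * βk) / 6)
    (hc' : c' = Complex.ofReal ((3 : ℝ) ^ ((1 : ℝ) / 4)) * (1 - I) / 2)
    (x y z f g t : ℂ)
    (hf : f = ((1 - I) / Complex.ofReal ((3 : ℝ) ^ ((3 : ℝ) / 4))) * (x + y - z))
    (hg : g = -((1 + I) / (4 * Complex.ofReal ((3 : ℝ) ^ ((3 : ℝ) / 4)))) *
      (((Real.sqrt 3 : ℂ) + I) * x - ((Real.sqrt 3 : ℂ) - I) * y + 2 * I * z))
    (ht : t = c' * z) :
    (x ^ 3 + y ^ 3) / 3 + z * x * y + αk * y + βk * x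
      = 3 * (c' * (2 * f * g ^ 2 - (f ^ 2 + 2 * t * f + 2 * κ₀) * g + θoo * f)
          - ((1 + I * (Real.sqrt 3 : ℂ)) / 6) * x + ((1 - I * (Real.sqrt 3 : ℂ)) / 6) * y
          + z ^ 3 / 9 + ((1 + I * (Real.sqrt 3 : ℂ)) / 6) * z * αk
          + ((1 - I * (Real.sqrt 3 : ℂ)) / 6) * z * βk) := by
  obtain ⟨r, hr, h1, h2, h3⟩ : ∃ r : ℂ, r ^ 4 = 3 ∧
      Complex.ofReal ((3 : ℝ) ^ ((1 : ℝ) / 4)) = r ∧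
      (Real.sqrt 3 : ℂ) = r ^ 2 ∧
      Complex.ofReal ((3 : ℝ) ^ ((3 : ℝ) / 4)) = r ^ 3 := by
    refine ⟨Complex.ofReal ((3 : ℝ) ^ ((1 : ℝ) / 4)), ?_, rfl, ?_, ?_⟩
    · rw [← Complex.ofReal_pow, ← Real.rpow_natCast, ← Real.rpow_mul (by norm_num)]
      norm_num
    · rw [← Complex.ofReal_pow, ← Real.rpow_natCast, ← Real.rpow_mul (by norm_num),
        Real.sqrt_eq_rpow]
      norm_num
    · rw [← Complex.ofReal_pow, ← Real.rpow_natCast, ← Real.rpow_mul (by norm_num)]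
      norm_num
  have hr0 : r ≠ 0 := by
    rintro rfl
    norm_num at hr
  rw [h1] at hc'
  rw [h3] at hf hg
  rw [h2] at hg hθoo ⊢
  have hf' : f = (1 - I) * (r / 3) * (x + y - z) := by
    rw [hf]
    field_simp
    rw [hr]
    ring
  have hg' : g = -((1 + I) / 4) * (r / 3) *
      ((r ^ 2 + I) * x - (r ^ 2 - I) * y + 2 * I * z) := by
    rw [hg]
    field_simp
    rw [hr]
    ring
  have hI : I ^ 2 = -1 := Complex.I_sq
  clear hf hg h1 h2 h3
  generalize I = i at *
  -- products occurring in the Hamiltonian, reduced modulo `i ^ 2 = -1`, `r ^ 4 = 3`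
  have e1 : c' * f = -i * r ^ 2 / 3 * (x + y - z) := by
    rw [hc', hf']
    linear_combination (r ^ 2 / 6 * (x + y - z)) * hI
  have e2 : c' * g = -(r ^ 2 / 12) *
      ((r ^ 2 + i) * x - (r ^ 2 - i) * y + 2 * i * z) := by
    rw [hc', hg']
    linear_combination (r ^ 2 / 24 *
      ((r ^ 2 + i) * x - (r ^ 2 - i) * y + 2 * i * z)) * hI
  have e3 : f * g = -(r ^ 2 / 18) * (x + y - z) *
      ((r ^ 2 + i) * x - (r ^ 2 - i) * y + 2 * i * z) := by
    rw [hf', hg']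
    linear_combination (r ^ 2 / 36 * (x + y - z) *
      ((r ^ 2 + i) * x - (r ^ 2 - i) * y + 2 * i * z)) * hI
  have e4 : c' ^ 2 = -i * r ^ 2 / 2 := by
    rw [hc']
    linear_combination (r ^ 2 / 4) * hI
  have key : c' * (2 * f * g ^ 2 - (f ^ 2 + 2 * t * f + 2 * κ₀) * g + θoo * f)
      = 2 * (f * g) * (c' * g) - (c' * f) * (f * g) - 2 * z * c' ^ 2 * (f * g)
        - 2 * κ₀ * (c' * g) + θoo * (c' * f) := by
    rw [ht]
    ring
  rw [key, e1, e2, e3, e4, hκ₀, hθoo]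
  have hr6 : r ^ 6 = 3 * r ^ 2 := by linear_combination r ^ 2 * hr
  have hr8 : r ^ 8 = 9 := by linear_combination (r ^ 4 + 3) * hr
  have hi3 : i ^ 3 = -i := by linear_combination i * hI
  have hi4 : i ^ 4 = 1 := by linear_combination (i ^ 2 - 1) * hI
  ring_nf
  simp only [hr, hr6, hr8, hI, hi3, hi4]
  ring
end

section
/- Let a₀, a₁, a₂, a₃ ∈ ℂ with a₀ + a₁ + a₂ + a₃ = 1. Let U ⊆ ℂ ∖ {0} be a nonempty open connected set and let q, p : U → ℂ be differentiable functions with q(t) ∉ {0, 1} for all t ∈ U that solve the Kajiwara–Noumi–Yamada Hamiltonian system for P_V: q'(t) = (1/t)(q(q−1)(2p+t) − a₁(q−1) − a₃q) and p'(t) = (1/t)(p(p+t)(1−2q) + (a₁+a₃)p − a₂t) on U. Then the function w(t) = 1 − 1/q(t) is twice differentiable and satisfies the fifth Painlevé equation w'' = (1/(2w) + 1/(w−1))(w')² − w'/t + ((w−1)²/t²)(α·w + β/w) + γ·w/t + δ·w(w+1)/(w−1) on U with parameters α = a₁²/2, β = −a₃²/2, γ = a₀ − a₂, δ = −1/2.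 -/
open Complex

/-- a solution `(q, p)` of the Kajiwara–Noumi–Yamada Hamiltonian system
for P_V with normalized root variables `a₀ + a₁ + a₂ + a₃ = 1` (with `q` omitting the
values 0 and 1, on a domain avoiding 0) yields, via `w = 1 − 1/q`, a solution of the
fifth Painlevé equation with parameters `α = a₁²/2`, `β = −a₃²/2`, `γ = a₀ − a₂`,
`δ = −1/2`. -/
theorem kny_hamiltonian_system_gives_PV
    (a₀ a₁ a₂ a₃ : ℂ) (hsum : a₀ + a₁ + a₂ + a₃ = 1)
    (U : Set ℂ)
    (hUo : IsOpen U) (hUne : U.Nonempty) (hUc : IsPreconnected U)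
    (hU0 : ∀ t ∈ U, t ≠ 0)
    (q p : ℂ → ℂ)
    (hq01 : ∀ t ∈ U, q t ≠ 0 ∧ q t ≠ 1)
    (hq : ∀ t ∈ U, HasDerivAt q
      ((1 / t) * (q t * (q t - 1) * (2 * p t + t) - a₁ * (q t - 1) - a₃ * q t)) t)
    (hp : ∀ t ∈ U, HasDerivAt p
      ((1 / t) * (p t * (p t + t) * (1 - 2 * q t) + (a₁ + a₃) * p t - a₂ * t)) t)
    (w : ℂ → ℂ) (hw_def : ∀ t, w t = 1 - 1 / q t)
    (α β γ δ : ℂ)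
    (hα : α = a₁ ^ 2 / 2) (hβ : β = -a₃ ^ 2 / 2)
    (hγ : γ = a₀ - a₂) (hδ : δ = -(1 / 2)) :
    ∀ t ∈ U, DifferentiableAt ℂ w t ∧ DifferentiableAt ℂ (deriv w) t ∧
      deriv (deriv w) t =
        (1 / (2 * w t) + 1 / (w t - 1)) * (deriv w t) ^ 2 - deriv w t / t
          + ((w t - 1) ^ 2 / t ^ 2) * (α * w t + β / w t)
          + γ * w t / t + δ * w t * (w t + 1) / (w t - 1) := by
  subst hα hβ hγ hδ
  obtain rfl : a₀ = 1 - a₁ - a₂ - a₃ := by linear_combination hsum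
  have hw : w = fun t => 1 - 1 / q t := funext hw_def
  have h1 : ∀ t ∈ U, HasDerivAt w
      (((1 / t) * (q t * (q t - 1) * (2 * p t + t) - a₁ * (q t - 1) - a₃ * q t)) / q t ^ 2) t := by
    intro t ht
    have h := ((hasDerivAt_const t (1 : ℂ)).div (hq t ht) (hq01 t ht).1).const_sub 1
    rw [hw]
    refine h.congr_deriv ?_
    ring
  intro t ht
  have ht0 := hU0 t ht
  obtain ⟨hq0, hq1⟩ := hq01 t ht
  have hq1' : q t - 1 ≠ 0 := sub_ne_zero.mpr hq1
  have hev : deriv w =ᶠ[nhds t] fun t =>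
      ((1 / t) * (q t * (q t - 1) * (2 * p t + t) - a₁ * (q t - 1) - a₃ * q t)) / q t ^ 2 := by
    filter_upwards [hUo.mem_nhds ht] with s hs using (h1 s hs).deriv
  have hQ := hq t ht
  have hP := hp t ht
  have hid := hasDerivAt_id t
  have h2 := ((((hasDerivAt_const t (1 : ℂ)).fun_div hid ht0).fun_mul
    ((((hQ.fun_mul (hQ.sub_const 1)).fun_mul ((hP.const_mul 2).fun_add hid)).fun_sub
      ((hQ.sub_const 1).const_mul a₁)).fun_sub (hQ.const_mul a₃))).fun_div
      (hQ.fun_pow 2) (pow_ne_zero 2 hq0)).congr_of_eventuallyEq hev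
  refine ⟨(h1 t ht).differentiableAt, h2.differentiableAt, ?_⟩
  rw [h2.deriv, (h1 t ht).deriv]
  have e1 : w t = (q t - 1) / q t := by rw [hw_def]; field_simp
  have e2 : w t - 1 = -1 / q t := by rw [hw_def]; ring
  rw [e2, e1]
  simp only [id]
  generalize q t = x at *
  generalize p t = y at *
  field_simp
  ring
end
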